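/- Let (T,f) be a Hubbard tree with kneading sequence ν and ρ = ρ_ν. If k < k' ≤ ρ(k) and the closest precritical point ζ_{k'} exists in T, then f^k(ζ_{k'}) is the closest precritical point ζ_{k'−k}. -/

import Mathlib

/- Common definitions for formalizing "Admissibility of kneading sequences and
structure of Hubbard trees for quadratic polynomials" by Bruin–Schleicher. -/

namespace HubbardTrees

/-- The symbols `0`, `1`, `*` used for itineraries and kneading sequences. -/
inductive Sym : Type
  | zero : Sym
  | one : Sym
  | star : Sym
deriving DecidableEq

/-- `A` is an arc in `X` joining `x` and `y` (a point if `x = y`, otherwise a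
homeomorphic image of `[0,1]` with endpoints `x` and `y`). -/
def IsArcBetween {X : Type*} [TopologicalSpace X] (A : Set X) (x y : X) : Prop :=
  (x = y ∧ A = {x}) ∨
  (x ≠ y ∧ ∃ γ : Path x y, Topology.IsEmbedding ⇑γ ∧ Set.range ⇑γ = A)

/-- The global arms at `x`: the connected components of `X \ {x}`. -/
def arms {X : Type*} [TopologicalSpace X] (x : X) : Set (Set X) :=
  {C | ∃ y, y ≠ x ∧ C = connectedComponentIn {x}ᶜ y}

/-- The global arm at `x` containing `y` (for `y ≠ x`): the component of `X \ {x}`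
containing `y`.  Local arms at `x` being germs of global arms, we represent the local
arm at `x` pointing towards `y` by this set. -/
def armTo {X : Type*} [TopologicalSpace X] (x y : X) : Set X :=
  connectedComponentIn {x}ᶜ y

/-- `x` is an endpoint: it has exactly one arm. -/
def IsEndpoint {X : Type*} [TopologicalSpace X] (x : X) : Prop :=
  (arms x).ncard = 1

/-- `x` is a branch point: it has at least three arms. -/
def IsBranchPt {X : Type*} [TopologicalSpace X] (x : X) : Prop :=
  3 ≤ (arms x).ncard

/-- `f` maps the set `A` homeomorphically onto its image. -/
def MapsHomeoOn {X : Type*} [TopologicalSpace X] (f : X → X) (A : Set X) : Prop :=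
  Topology.IsEmbedding (A.restrict f)

/-- `f` is a local homeomorphism onto its image at `x`. -/
def IsLocalHomeoAt {X : Type*} [TopologicalSpace X] (f : X → X) (x : X) : Prop :=
  ∃ U : Set X, IsOpen U ∧ x ∈ U ∧ Topology.IsEmbedding (U.restrict f)

/-- `g` sends the local arm at `x` represented by the global arm `C` to the local
arm at `g x` represented by `C'` (germ condition: some initial piece of `C` at `x`
is mapped into `C'`). -/
def MapsLocalArm {X : Type*} [TopologicalSpace X] (g : X → X) (x : X) (C C' : Set X) : Prop :=
  C ∈ arms x ∧ C' ∈ arms (g x) ∧ ∃ U ∈ nhds x, g '' (C ∩ U) ⊆ C'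

/-- `z` is periodic under `f` with exact period `n`. -/
def ExactPeriod {Y : Type*} (f : Y → Y) (z : Y) (n : ℕ) : Prop :=
  1 ≤ n ∧ f^[n] z = z ∧ ∀ k, 1 ≤ k → k < n → f^[k] z ≠ z

/-- The first return map `f^[n]` of the fixed point `z` of `f^[n]` permutes all the
local arms at `z` transitively in a single cycle. -/
def ArmsTransitive {X : Type*} [TopologicalSpace X] (f : X → X) (n : ℕ) (z : X) : Prop :=
  ∀ C ∈ arms z, ∀ C' ∈ arms z, ∃ j : ℕ, MapsLocalArm (f^[n * j]) z C C'

/-- An (abstract) Hubbard tree: a finite topological tree `X` together with a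
continuous surjection `f` and a critical point `c0`, subject to the axioms of
Bruin–Schleicher. -/
structure HubbardTree (X : Type*) [TopologicalSpace X] : Type _ where
  /-- the dynamics -/
  f : X → X
  /-- the critical point -/
  c0 : X
  compact : CompactSpace X
  t2 : T2Space X
  conn : ConnectedSpace X
  /-- the unique arc `[x,y]` joining two points -/
  arc : X → X → Set X
  arc_isArc : ∀ x y : X, IsArcBetween (arc x y) x y
  arc_unique : ∀ (x y : X) (A : Set X), IsArcBetween A x y → A = arc x y
  -- finiteness of the tree
  arms_finite : ∀ x : X, (arms x).Finite
  branch_finite : Set.Finite {x : X | IsBranchPt x}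
  endpoint_finite : Set.Finite {x : X | IsEndpoint x}
  cont : Continuous f
  surj : Function.Surjective f
  /-- every point has at most two inverse images -/
  two_preimages : ∀ y : X, ∃ a b : X, f ⁻¹' {y} ⊆ {a, b}
  /-- local homeomorphism onto its image away from the critical point -/
  local_homeo : ∀ x : X, x ≠ c0 → IsLocalHomeoAt f x
  /-- all endpoints lie on the critical orbit -/
  endpoints_on_orbit : ∀ x : X, IsEndpoint x → ∃ k : ℕ, f^[k] c0 = x
  /-- the critical point is periodic or preperiodic -/
  crit_preperiodic : ∃ k n : ℕ, 1 ≤ n ∧ f^[k + n] c0 = f^[k] c0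
  /-- the critical point is not fixed -/
  crit_not_fixed : f c0 ≠ c0
  /-- expansivity -/
  expansive : ∀ x y : X, x ≠ y →
    (IsBranchPt x ∨ ∃ k : ℕ, f^[k] c0 = x) →
    (IsBranchPt y ∨ ∃ k : ℕ, f^[k] c0 = y) →
    ∃ n : ℕ, c0 ∈ f^[n] '' (arc x y)

namespace HubbardTree

variable {X : Type*} [TopologicalSpace X] (H : HubbardTree X)

/-- The critical value `c₁ = f(c₀)`. -/
def c1 : X := H.f H.c0

/-- The component `T₁` of `T \ {c₀}` containing the critical value. -/
def T1 : Set X := connectedComponentIn {H.c0}ᶜ H.c1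

open Classical in
/-- The symbol (`0`, `1` or `*`) attached to a point of the tree. -/
noncomputable def symOf (x : X) : Sym :=
  if x = H.c0 then Sym.star else if x ∈ H.T1 then Sym.one else Sym.zero

/-- The itinerary of `x`: a sequence of symbols, 1-indexed (the value at index `0`
is irrelevant); entry `k ≥ 1` is the symbol of `f^[k-1] x`. -/
noncomputable def itin (x : X) : ℕ → Sym :=
  fun k => H.symOf (H.f^[k - 1] x)

/-- The kneading sequence: the itinerary of the critical value (1-indexed). -/
noncomputable def kneading : ℕ → Sym := H.itin H.c1

/-- `z` is the characteristic point of its periodic orbit: `c₁` lies in one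
component of `X \ {z}` while `c₀` and all other points of the orbit lie in a
different component. -/
def IsCharacteristic (z : X) : Prop :=
  ∃ Cv Cz : Set X, Cv ∈ arms z ∧ Cz ∈ arms z ∧ Cv ≠ Cz ∧
    H.c1 ∈ Cv ∧ H.c0 ∈ Cz ∧ ∀ k : ℕ, H.f^[k] z ≠ z → H.f^[k] z ∈ Cz

/-- The first return map fixes the local arm at `z` pointing to the critical point
and permutes all other local arms transitively in a single cycle. -/
def OtherArmsTransitive (n : ℕ) (z : X) : Prop :=
  ∀ C ∈ arms z, C ≠ armTo z H.c0 → ∀ C' ∈ arms z, C' ≠ armTo z H.c0 →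
    ∃ j : ℕ, MapsLocalArm (H.f^[n * j]) z C C'

/-- `z` is the characteristic point of an evil periodic orbit of branch points of
exact period `n`. -/
def IsEvilOrbit (z : X) (n : ℕ) : Prop :=
  ExactPeriod H.f z n ∧ (∀ k : ℕ, IsBranchPt (H.f^[k] z)) ∧
    H.IsCharacteristic z ∧ ¬ ArmsTransitive H.f n z

/-- `x` is precritical with `Step(x) = k`: `k ≥ 1` is minimal with `f^[k] x = c₁`. -/
def Step (x : X) (k : ℕ) : Prop :=
  1 ≤ k ∧ H.f^[k] x = H.c1 ∧ ∀ j, 1 ≤ j → j < k → H.f^[j] x ≠ H.c1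

/-- `x` is the closest precritical point `ζ_k`. -/
def IsClosestPrecritical (x : X) (k : ℕ) : Prop :=
  H.Step x k ∧ ∀ j, 1 ≤ j → j < k → H.c1 ∉ H.f^[j] '' (H.arc H.c1 x)

/-- `x` is the earliest precritical point on the set `A`, with `Step(x) = k`:
it is a precritical point on `A` of minimal Step. -/
def IsEarliestPrecriticalOn (A : Set X) (x : X) (k : ℕ) : Prop :=
  x ∈ A ∧ H.Step x k ∧ ∀ y ∈ A, ∀ j : ℕ, H.Step y j → k ≤ j

/-- Marked points: branch points and points of the critical orbit. -/
def MarkedPt (x : X) : Prop :=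
  IsBranchPt x ∨ ∃ k : ℕ, H.f^[k] H.c0 = x

/-- Two marked points are joined by an edge if the arc between them contains no
further marked point. -/
def IsEdge (x y : X) : Prop :=
  H.MarkedPt x ∧ H.MarkedPt y ∧ x ≠ y ∧
    ∀ w ∈ H.arc x y, H.MarkedPt w → w = x ∨ w = y

/-- Equivalence of Hubbard trees: a bijection between the marked points which
conjugates the dynamics and preserves edges. -/
def Equivalent {Y : Type*} [TopologicalSpace Y] (H' : HubbardTree Y) : Prop :=
  ∃ φ : X → Y,
    (∀ x : X, H.MarkedPt x → H'.MarkedPt (φ x)) ∧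
    (∀ x x' : X, H.MarkedPt x → H.MarkedPt x' → φ x = φ x' → x = x') ∧
    (∀ y : Y, H'.MarkedPt y → ∃ x : X, H.MarkedPt x ∧ φ x = y) ∧
    φ H.c0 = H'.c0 ∧
    (∀ x : X, H.MarkedPt x → φ (H.f x) = H'.f (φ x)) ∧
    (∀ x x' : X, H.MarkedPt x → H.MarkedPt x' →
      (H.IsEdge x x' ↔ H'.IsEdge (φ x) (φ x')))

end HubbardTree

/-! ### Combinatorics of kneading sequences -/

/-- The function `ρ_ν(n) = inf { k > n : ν_k ≠ ν_{k-n} } ∈ ℕ ∪ {∞}` (sequences are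
1-indexed). -/
noncomputable def rho (ν : ℕ → Sym) (n : ℕ) : ℕ∞ :=
  sInf {e : ℕ∞ | ∃ j : ℕ, e = (j : ℕ∞) ∧ n < j ∧ ν j ≠ ν (j - n)}

/-- `RhoOrbit ν k m` means that `m` belongs to the `ρ`-orbit
`k → ρ(k) → ρ(ρ(k)) → ⋯` of `k` (stopped before reaching `∞`). -/
inductive RhoOrbit (ν : ℕ → Sym) : ℕ → ℕ → Prop
  | refl (k : ℕ) : RhoOrbit ν k k
  | step {k m j : ℕ} : RhoOrbit ν k m → rho ν m = (j : ℕ∞) → RhoOrbit ν k j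

/-- `m` occurs in the internal address `1 → ρ(1) → ρ(ρ(1)) → ⋯` of `ν`. -/
def InternalAddress (ν : ℕ → Sym) (m : ℕ) : Prop := RhoOrbit ν 1 m

/-- `ν` is a `*`-periodic kneading sequence of (exact) period `n`:
`ν = overline(1 ν₂ … ν_{n-1} *)`. -/
def StarPeriodic (ν : ℕ → Sym) (n : ℕ) : Prop :=
  2 ≤ n ∧ ν 1 = Sym.one ∧ ν n = Sym.star ∧
    (∀ k, 1 ≤ k → ν (k + n) = ν k) ∧
    (∀ k, 1 ≤ k → k < n → ν k ≠ Sym.star)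

/-- `ν` fails the admissibility condition for period `m`. -/
def FailsAdmissibility (ν : ℕ → Sym) (m : ℕ) : Prop :=
  1 ≤ m ∧
  ¬ InternalAddress ν m ∧
  (∀ k : ℕ, k ∣ m → 1 ≤ k → k < m → rho ν k ≤ (m : ℕ∞)) ∧
  ∃ R r : ℕ, rho ν m = (R : ℕ∞) ∧ 1 ≤ r ∧ r ≤ m ∧ r ≡ R [MOD m] ∧ RhoOrbit ν r m

open Classical in
/-- The number `q(m)` of arms predicted by the kneading sequence, where
`ρ(m) = R < ∞` and `r ∈ {1,…,m}` is congruent to `R` modulo `m`. -/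
noncomputable def qArms (ν : ℕ → Sym) (m R r : ℕ) : ℕ :=
  if RhoOrbit ν r m then (R - r) / m + 1 else (R - r) / m + 2


/-! ### Embeddings into the plane and cyclic order of arms -/

/-- Three points in the plane are in (strictly) counterclockwise position. -/
def Ccw (p q r : ℝ × ℝ) : Prop :=
  0 < (q.1 - p.1) * (r.2 - p.2) - (q.2 - p.2) * (r.1 - p.1)

namespace HubbardTree

variable {X : Type*} [TopologicalSpace X] (H : HubbardTree X)

/-- Under an embedding `φ` of the tree into the plane, `p` is a first exit point of
the arm `C` at `x` through the circle of radius `ε` around `φ x`: `p = φ y` for a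
point `y ∈ C` at distance exactly `ε`, such that the arc from `x` to `y` stays
within distance `< ε` before reaching `y`. -/
def ExitPt (φ : X → ℝ × ℝ) (x : X) (C : Set X) (ε : ℝ) (p : ℝ × ℝ) : Prop :=
  ∃ y ∈ C, φ y = p ∧ dist (φ x) p = ε ∧
    ∀ z ∈ H.arc x y, z ≠ y → dist (φ x) (φ z) < ε

/-- The local arms at `x` represented by the arms `C, C', C''` are in
counterclockwise cyclic order under the embedding `φ`. -/
def ArmsCcw (φ : X → ℝ × ℝ) (x : X) (C C' C'' : Set X) : Prop :=
  ∃ ε₀ : ℝ, 0 < ε₀ ∧ ∀ ε : ℝ, 0 < ε → ε < ε₀ →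
    ∀ p p' p'' : ℝ × ℝ, H.ExitPt φ x C ε p → H.ExitPt φ x C' ε p' →
      H.ExitPt φ x C'' ε p'' → Ccw p p' p''

/-- `f` respects the cyclic order (induced by the embedding `φ`) of the local arms
at all branch points. -/
def RespectsCyclicOrder (φ : X → ℝ × ℝ) : Prop :=
  ∀ x : X, IsBranchPt x →
    ∀ C C' C'' : Set X, C ∈ arms x → C' ∈ arms x → C'' ∈ arms x →
      C ≠ C' → C' ≠ C'' → C ≠ C'' → H.ArmsCcw φ x C C' C'' →
      ∀ D D' D'' : Set X, MapsLocalArm H.f x C D → MapsLocalArm H.f x C' D' →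
        MapsLocalArm H.f x C'' D'' → H.ArmsCcw φ (H.f x) D D' D''

/-- The Hubbard tree can be topologically embedded into the plane `ℝ²` so that `f`
respects the cyclic order of the local arms at all branch points. -/
def PlanarEmbeddable : Prop :=
  ∃ φ : X → ℝ × ℝ, Topology.IsEmbedding φ ∧ H.RespectsCyclicOrder φ

end HubbardTree

/-!
The point `x` is the closest precritical point `ζ_k` if and only if `Step(x) = k` and the itinerary
of `x` agrees with the kneading sequence `ν` in the entries `1, …, k - 1`. Granting this, for
`x = ζ_{k'}` the entry `j < k' - k` of the itinerary of `f^[k] x` is the entry `j + k` of that of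
`x`, hence `ν_{j+k}`, which equals `ν_j` because `j + k < ρ(k)`.

For the characterization, `f` maps an arc avoiding `c₀` injectively, hence onto the arc between the
images of its ends, and `c₁ ∈ f^[j] [c₁, x]` means `c₀ ∈ f^[j-1] [c₁, x]`. So it suffices that
`c₀ ∉ [u, v]` if and only if `u` and `v` have the same symbol and this symbol is not `*`, i.e. that
there are at most two arms at `c₀`. As `f` is injective near every other point, images of interior
points of the tree stay interior up to the first visit to `c₀`; if `c₁` were interior, no endpoint
of the tree beyond `c₁` could be on the critical orbit. So `c₁` is an endpoint, and at most two arms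
at `c₀` can be folded onto its only arm, points having at most two preimages.
-/

section CutPoints

open Set

variable {X : Type*} [TopologicalSpace X] {p b y : X}

lemma mem_armTo_of_ne (h : y ≠ p) : y ∈ armTo p y :=
  mem_connectedComponentIn h

lemma notMem_armTo (p y : X) : p ∉ armTo p y :=
  fun h => connectedComponentIn_subset _ _ h rfl

lemma armTo_self (p : X) : armTo p p = ∅ :=
  connectedComponentIn_eq_empty (not_not.2 rfl)

lemma isPreconnected_armTo (p y : X) : IsPreconnected (armTo p y) :=
  isPreconnected_connectedComponentIn

lemma subset_armTo {S : Set X} (hS : IsPreconnected S) (hp : p ∉ S) (hy : y ∈ S) :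
    S ⊆ armTo p y :=
  hS.subset_connectedComponentIn hy (subset_compl_singleton_iff.2 hp)

lemma closure_armTo_subset_insert (p y : X) : closure (armTo p y) ⊆ insert p (armTo p y) := by
  intro z hz
  refine or_iff_not_imp_left.2 fun hzp => ?_
  have hy : y ≠ p := by
    rintro rfl
    simp [armTo_self] at hz
  have hconn : IsPreconnected (closure (armTo p y) ∩ {p}ᶜ) :=
    (isPreconnected_armTo p y).subset_closure
      (fun w hw => ⟨subset_closure hw, connectedComponentIn_subset _ _ hw⟩) inter_subset_left
  exact subset_armTo hconn (fun h => h.2 rfl) ⟨subset_closure (mem_armTo_of_ne hy), hy⟩ ⟨hz, hzp⟩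

lemma isClosed_insert_armTo [T1Space X] (p y : X) : IsClosed (insert p (armTo p y)) := by
  refine isClosed_of_closure_subset ?_
  rw [insert_eq, closure_union, closure_singleton, ← insert_eq]
  exact insert_subset (mem_insert _ _) (closure_armTo_subset_insert p y)

lemma isOpen_armTo [T1Space X] (hfin : (arms p).Finite) (y : X) : IsOpen (armTo p y) := by
  have hcompl : (armTo p y)ᶜ = {p} ∪ ⋃ C ∈ arms p \ {armTo p y}, insert p C := by
    ext z
    simp only [mem_compl_iff, singleton_union, mem_insert_iff, mem_iUnion, mem_sdiff,
      mem_singleton_iff, exists_prop]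
    constructor
    · refine fun hz => or_iff_not_imp_left.2 fun hzp => ?_
      refine ⟨armTo p z, ⟨⟨z, hzp, rfl⟩, fun h => hz (h ▸ mem_armTo_of_ne hzp)⟩,
        .inr (mem_armTo_of_ne hzp)⟩
    · rintro (rfl | ⟨_, ⟨⟨w, -, rfl⟩, hne⟩, rfl | hz⟩) hzy
      · exact notMem_armTo z y hzy
      · exact notMem_armTo z y hzy
      · exact hne ((connectedComponentIn_eq hz).trans (connectedComponentIn_eq hzy).symm)
  rw [← isClosed_compl_iff, hcompl]
  refine isClosed_singleton.union (hfin.sdiff.isClosed_biUnion ?_)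
  rintro _ ⟨⟨w, -, rfl⟩, -⟩
  exact isClosed_insert_armTo p w

lemma isPreconnected_insert_armTo [T1Space X] [PreconnectedSpace X] (hfin : (arms p).Finite)
    (y : X) : IsPreconnected (insert p (armTo p y)) := by
  rcases eq_or_ne y p with rfl | hy
  · simpa [armTo_self] using isPreconnected_singleton (x := y)
  have hp : p ∈ closure (armTo p y) := by
    by_contra hp
    have hclosed : IsClosed (armTo p y) := isClosed_of_closure_subset fun z hz =>
      (closure_armTo_subset_insert p y hz).resolve_left fun h => hp (h ▸ hz)
    have huniv := IsClopen.eq_univ ⟨hclosed, isOpen_armTo hfin y⟩ ⟨y, mem_armTo_of_ne hy⟩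
    exact notMem_armTo p y (huniv ▸ mem_univ p)
  exact (isPreconnected_armTo p y).subset_closure (subset_insert _ _)
    (insert_subset hp subset_closure)

lemma insert_armTo_subset_armTo [T1Space X] [PreconnectedSpace X] (hfin : (arms p).Finite)
    (hb : b ≠ p) (hyp : y ≠ p) (hy : y ∉ armTo p b) : insert p (armTo p b) ⊆ armTo y b :=
  subset_armTo (isPreconnected_insert_armTo hfin b) (by simp [hyp, hy])
    (mem_insert_of_mem p (mem_armTo_of_ne hb))

lemma isEndpoint_of_compl_subset_armTo (hb : b ≠ p) (h : {p}ᶜ ⊆ armTo p b) : IsEndpoint p := by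
  refine ncard_eq_one.2 ⟨armTo p b, Subset.antisymm ?_ (singleton_subset_iff.2 ⟨b, hb, rfl⟩)⟩
  rintro _ ⟨y, hy, rfl⟩
  exact (connectedComponentIn_eq (h hy)).symm

lemma sUnion_ne_univ_of_isChain [CompactSpace X] {c : Set (Set X)} (hne : c.Nonempty)
    (hchain : IsChain (· ⊆ ·) c) (hopen : ∀ s ∈ c, IsOpen s) (huniv : ∀ s ∈ c, s ≠ univ) :
    ⋃₀ c ≠ univ := by
  intro h
  have := hne.to_subtype
  obtain ⟨s, hs⟩ := isCompact_univ.elim_directed_cover (fun s : c => (s : Set X))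
    (fun s => hopen s s.2) (by rw [← sUnion_eq_iUnion, h]) hchain.directedOn.directed_val
  exact huniv s s.2 (univ_subset_iff.1 hs)

/- Zorn's lemma for the arms `armTo p b` with `p ∉ K`: if `armTo p b` is maximal, then no point
lies beyond `p` as seen from `b`, so `p` is an endpoint. -/
lemma exists_isEndpoint_notMem [T1Space X] [PreconnectedSpace X] [CompactSpace X]
    (hfin : ∀ x : X, (arms x).Finite) {K : Set X} (hK : IsPreconnected K) (hne : K.Nonempty)
    (hK' : K ≠ univ) : ∃ e, IsEndpoint e ∧ e ∉ K := by
  obtain ⟨b, hb⟩ := hne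
  obtain ⟨z, hz⟩ := (ne_univ_iff_exists_notMem K).1 hK'
  have hbne {p : X} (hp : p ∉ K) : b ≠ p := ne_of_mem_of_not_mem hb hp
  have hchain : ∀ c ⊆ (armTo · b) '' Kᶜ, IsChain (· ⊆ ·) c → c.Nonempty →
      ∃ ub ∈ (armTo · b) '' Kᶜ, ∀ s ∈ c, s ⊆ ub := by
    intro c hc hch ⟨s₀, hs₀⟩
    have hcover : ⋃₀ c ≠ univ := by
      refine sUnion_ne_univ_of_isChain ⟨s₀, hs₀⟩ hch (fun s hs => ?_) fun s hs => ?_ <;>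
        obtain ⟨p, -, rfl⟩ := hc hs
      · exact isOpen_armTo (hfin p) b
      · exact (ne_univ_iff_exists_notMem _).2 ⟨p, notMem_armTo p b⟩
    obtain ⟨y, hy⟩ := (ne_univ_iff_exists_notMem _).1 hcover
    have hyK : y ∉ K := by
      obtain ⟨p, hp, rfl⟩ := hc hs₀
      exact fun h => hy ⟨_, hs₀, subset_armTo hK hp hb h⟩
    refine ⟨_, ⟨y, hyK, rfl⟩, fun s hs => ?_⟩
    obtain ⟨p, hp, rfl⟩ := hc hs
    rcases eq_or_ne y p with rfl | hyp
    · rfl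
    · exact (subset_insert _ _).trans
        (insert_armTo_subset_armTo (hfin p) (hbne hp) hyp fun h => hy ⟨_, hs, h⟩)
  obtain ⟨_, -, hmax⟩ := zorn_subset_nonempty _ hchain _ ⟨z, hz, rfl⟩
  obtain ⟨p, hp, rfl⟩ := hmax.prop
  refine ⟨p, isEndpoint_of_compl_subset_armTo (hbne hp) fun y hyp => ?_, hp⟩
  by_contra hy
  have hsub := insert_armTo_subset_armTo (hfin p) (hbne hp) hyp hy
  have hyK : y ∉ K := fun h => hy (subset_armTo hK hp hb h)
  exact notMem_armTo p b <| hmax.le_of_ge ⟨y, hyK, rfl⟩ ((subset_insert _ _).trans hsub)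
    (hsub (mem_insert p _))

end CutPoints

section ArcParametrization

open Set

variable {X : Type*} [TopologicalSpace X] {A B : Set X} {a b p : X}

lemma isArcBetween_image_Icc [T2Space X] {g : ℝ → X} {s t : ℝ} (hst : s ≤ t)
    (hg : ContinuousOn g (Icc s t)) (hi : InjOn g (Icc s t)) :
    IsArcBetween (g '' Icc s t) (g s) (g t) := by
  rcases hst.eq_or_lt with rfl | hlt
  · exact .inl ⟨rfl, by simp⟩
  have himage : AffineMap.lineMap s t '' Icc (0 : ℝ) 1 = Icc s t := by
    rw [← segment_eq_image_lineMap, segment_eq_Icc hst]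
  have hmem (u : unitInterval) : AffineMap.lineMap s t (u : ℝ) ∈ Icc s t :=
    himage ▸ mem_image_of_mem _ u.2
  let γ : Path (g s) (g t) :=
    { toFun := fun u => g (AffineMap.lineMap s t (u : ℝ))
      continuous_toFun := hg.comp_continuous (by fun_prop) hmem
      source' := by simp
      target' := by simp }
  have hγ : Function.Injective γ := fun u v huv =>
    Subtype.ext (AffineMap.lineMap_injective ℝ hlt.ne (hi (hmem u) (hmem v) huv))
  refine .inr ⟨fun h => hlt.ne (hi (left_mem_Icc.2 hst) (right_mem_Icc.2 hst) h), γ,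
    (γ.continuous.isClosedEmbedding hγ).isEmbedding, ?_⟩
  rw [← himage, image_image, image_eq_range]
  rfl

lemma IsArcBetween.exists_eq_image_Icc (hA : IsArcBetween A a b) (s : ℝ) :
    ∃ g : ℝ → X, ∃ t, s ≤ t ∧ Continuous g ∧ InjOn g (Icc s t) ∧ g s = a ∧ g t = b ∧
      A = g '' Icc s t := by
  rcases hA with ⟨rfl, rfl⟩ | ⟨-, γ, hγ, rfl⟩
  · exact ⟨fun _ => a, s, le_rfl, continuous_const, by simp, rfl, rfl, by simp⟩
  have hinj : InjOn γ.extend (Icc 0 1) := fun u hu v hv huv => by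
    rw [γ.extend_apply hu, γ.extend_apply hv] at huv
    exact congrArg Subtype.val (hγ.injective huv)
  refine ⟨fun r => γ.extend (r - s), s + 1, by simp, by fun_prop, fun u hu v hv huv => ?_,
    by simp, by simp, ?_⟩
  · have := hinj (by grind) (by grind) huv
    linarith
  · have himage : γ.extend '' Icc 0 1 = range γ := by
      rw [image_eq_range]
      exact congrArg range (funext fun u => γ.extend_apply u.2)
    rw [← himage, ← image_image γ.extend (· - s), image_sub_const_Icc, sub_self,
      add_sub_cancel_left]

lemma IsArcBetween.isCompact (hA : IsArcBetween A a b) : IsCompact A := by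
  obtain ⟨g, t, -, hg, -, -, -, rfl⟩ := hA.exists_eq_image_Icc 0
  exact isCompact_Icc.image hg

lemma IsArcBetween.isPreconnected (hA : IsArcBetween A a b) : IsPreconnected A := by
  obtain ⟨g, t, -, hg, -, -, -, rfl⟩ := hA.exists_eq_image_Icc 0
  exact isPreconnected_Icc.image g hg.continuousOn

lemma IsArcBetween.left_mem (hA : IsArcBetween A a b) : a ∈ A := by
  obtain ⟨g, t, ht, -, -, rfl, -, rfl⟩ := hA.exists_eq_image_Icc 0
  exact mem_image_of_mem g (left_mem_Icc.2 ht)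

lemma IsArcBetween.symm [T2Space X] (hA : IsArcBetween A a b) : IsArcBetween A b a := by
  obtain ⟨g, t, ht, hg, hi, rfl, rfl, rfl⟩ := hA.exists_eq_image_Icc 0
  have hrev := isArcBetween_image_Icc (g := fun r => g (-r)) (neg_le_neg ht) (by fun_prop)
    fun u hu v hv huv => neg_injective (hi (by grind) (by grind) huv)
  rwa [← image_image g Neg.neg, image_neg_eq_neg, neg_Icc, neg_neg, neg_neg] at hrev

lemma IsArcBetween.union [T2Space X] (hA : IsArcBetween A a p) (hB : IsArcBetween B p b)
    (hAB : A ∩ B ⊆ {p}) : IsArcBetween (A ∪ B) a b := by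
  obtain ⟨g, t, ht, hg, hgi, rfl, rfl, rfl⟩ := hA.exists_eq_image_Icc 0
  obtain ⟨k, u, hu, hk, hki, hkt, rfl, rfl⟩ := hB.exists_eq_image_Icc t
  let l : ℝ → X := fun r => if r ≤ t then g r else k r
  have hl : Continuous l :=
    hg.if_le hk continuous_id continuous_const fun r hr => hr ▸ hkt.symm
  have hlg : EqOn l g (Icc 0 t) := fun r hr => if_pos hr.2
  have hlk : EqOn l k (Icc t u) := fun r hr => by
    rcases hr.1.eq_or_lt with rfl | h
    · rw [hkt]; exact if_pos le_rfl
    · exact if_neg h.not_ge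
  have hli : InjOn l (Icc 0 u) := by
    rw [← Icc_union_Ioc_eq_Icc ht hu, injOn_union (by grind)]
    refine ⟨hgi.congr hlg.symm, (hki.congr hlk.symm).mono Ioc_subset_Icc_self,
      fun r hr q hq h => ?_⟩
    have hq' : q ∈ Icc t u := Ioc_subset_Icc_self hq
    rw [hlg hr, hlk hq'] at h
    have hkq : k q = k t := hkt ▸ h ▸ hAB ⟨mem_image_of_mem g hr, h ▸ mem_image_of_mem k hq'⟩
    exact hq.1.ne' (hki hq' (left_mem_Icc.2 hu) hkq)
  have harc := isArcBetween_image_Icc (ht.trans hu) hl.continuousOn hli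
  rwa [← Icc_union_Icc_eq_Icc ht hu, image_union, hlg.image_eq, hlk.image_eq,
    hlg (left_mem_Icc.2 ht), hlk (right_mem_Icc.2 hu)] at harc

end ArcParametrization

/-- `arc` assigns to any two points of the Hausdorff space `X` the only arc joining them, i.e. `X`
is uniquely arcwise connected and `arc x y` is `[x, y]`. -/
structure IsArcSystem {X : Type*} [TopologicalSpace X] (arc : X → X → Set X) : Prop where
  t2 : T2Space X
  isArcBetween : ∀ x y, IsArcBetween (arc x y) x y
  eq_arc : ∀ {x y A}, IsArcBetween A x y → A = arc x y

/-- `p` lies in the relative interior of some arc; in a finite tree these are the points which are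
not endpoints. -/
def IsInnerPt {X : Type*} (arc : X → X → Set X) (p : X) : Prop :=
  ∃ a b, a ≠ p ∧ b ≠ p ∧ p ∈ arc a b

namespace IsArcSystem

open Set Topology

section Betweenness

variable {X : Type*} [TopologicalSpace X] {arc : X → X → Set X} {a b p q : X}

lemma image_Icc_eq_arc (h : IsArcSystem arc) {g : ℝ → X} {s t : ℝ} (hst : s ≤ t)
    (hg : ContinuousOn g (Icc s t)) (hi : InjOn g (Icc s t)) : g '' Icc s t = arc (g s) (g t) :=
  have := h.t2
  h.eq_arc (isArcBetween_image_Icc hst hg hi)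

lemma arc_self (h : IsArcSystem arc) (a : X) : arc a a = {a} :=
  (h.eq_arc (.inl ⟨rfl, rfl⟩)).symm

lemma arc_comm (h : IsArcSystem arc) (a b : X) : arc a b = arc b a :=
  have := h.t2
  h.eq_arc (h.isArcBetween a b).symm

lemma left_mem_arc (h : IsArcSystem arc) (a b : X) : a ∈ arc a b :=
  (h.isArcBetween a b).left_mem

lemma right_mem_arc (h : IsArcSystem arc) (a b : X) : b ∈ arc a b :=
  h.arc_comm b a ▸ h.left_mem_arc b a

lemma isPreconnected_arc (h : IsArcSystem arc) (a b : X) : IsPreconnected (arc a b) :=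
  (h.isArcBetween a b).isPreconnected

lemma isClosed_arc (h : IsArcSystem arc) (a b : X) : IsClosed (arc a b) :=
  have := h.t2
  (h.isArcBetween a b).isCompact.isClosed

lemma preconnectedSpace (h : IsArcSystem arc) : PreconnectedSpace X :=
  ⟨isPreconnected_of_forall_pair fun a _ b _ =>
    ⟨arc a b, subset_univ _, h.left_mem_arc a b, h.right_mem_arc a b, h.isPreconnected_arc a b⟩⟩

lemma arc_eq_union_of_inter_subset (h : IsArcSystem arc) (hp : arc a p ∩ arc p b ⊆ {p}) :
    arc a b = arc a p ∪ arc p b :=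
  have := h.t2
  (h.eq_arc ((h.isArcBetween a p).union (h.isArcBetween p b) hp)).symm

lemma arc_inter_subset (h : IsArcSystem arc) (hp : p ∈ arc a b) : arc a p ∩ arc p b ⊆ {p} := by
  obtain ⟨g, t, -, hg, hi, rfl, rfl, hA⟩ := (h.isArcBetween a b).exists_eq_image_Icc 0
  obtain ⟨r, hr, rfl⟩ := hA ▸ hp
  rw [← h.image_Icc_eq_arc hr.1 hg.continuousOn (hi.mono (Icc_subset_Icc_right hr.2)),
    ← h.image_Icc_eq_arc hr.2 hg.continuousOn (hi.mono (Icc_subset_Icc_left hr.1))]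
  rintro _ ⟨⟨u, hu, rfl⟩, v, hv, hvu⟩
  have hvu : v = u := hi ⟨hr.1.trans hv.1, hv.2⟩ ⟨hu.1, hu.2.trans hr.2⟩ hvu
  exact congrArg g (le_antisymm hu.2 (hvu ▸ hv.1))

lemma mem_arc_iff (h : IsArcSystem arc) : p ∈ arc a b ↔ arc a p ∩ arc p b ⊆ {p} :=
  ⟨h.arc_inter_subset, fun hp =>
    h.arc_eq_union_of_inter_subset hp ▸ .inl (h.right_mem_arc a p)⟩

lemma arc_eq_union (h : IsArcSystem arc) (hp : p ∈ arc a b) : arc a b = arc a p ∪ arc p b :=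
  h.arc_eq_union_of_inter_subset (h.arc_inter_subset hp)

lemma arc_subset_left (h : IsArcSystem arc) (hp : p ∈ arc a b) : arc a p ⊆ arc a b :=
  h.arc_eq_union hp ▸ subset_union_left

lemma arc_subset_right (h : IsArcSystem arc) (hp : p ∈ arc a b) : arc p b ⊆ arc a b :=
  h.arc_eq_union hp ▸ subset_union_right

lemma mem_arc_of_mem_left (h : IsArcSystem arc) (hp : p ∈ arc a b) (hq : q ∈ arc a p) :
    p ∈ arc q b :=
  h.mem_arc_iff.2 ((inter_subset_inter_left _ (h.arc_subset_right hq)).trans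
    (h.arc_inter_subset hp))

lemma mem_arc_of_mem_right (h : IsArcSystem arc) (hp : p ∈ arc a b) (hq : q ∈ arc p b) :
    p ∈ arc a q :=
  h.mem_arc_iff.2 ((inter_subset_inter_right _ (h.arc_subset_left hq)).trans
    (h.arc_inter_subset hp))

lemma exists_first_mem (h : IsArcSystem arc) {K : Set X} (hK : IsClosed K) (hb : b ∈ K) :
    ∃ m ∈ arc a b, m ∈ K ∧ arc a m ∩ K ⊆ {m} := by
  obtain ⟨g, t, ht, hg, hi, rfl, rfl, hA⟩ := (h.isArcBetween a b).exists_eq_image_Icc 0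
  obtain ⟨r, ⟨hr, hrK⟩, hmin⟩ := (isCompact_Icc.inter_right (hK.preimage hg)).exists_isLeast
    ⟨t, right_mem_Icc.2 ht, hb⟩
  refine ⟨g r, hA ▸ mem_image_of_mem g hr, hrK, ?_⟩
  rw [← h.image_Icc_eq_arc hr.1 hg.continuousOn (hi.mono (Icc_subset_Icc_right hr.2))]
  rintro _ ⟨⟨u, hu, rfl⟩, huK⟩
  exact congrArg g (le_antisymm hu.2 (hmin ⟨⟨hu.1, hu.2.trans hr.2⟩, huK⟩))

lemma arc_subset_union (h : IsArcSystem arc) (a b p : X) : arc a b ⊆ arc a p ∪ arc p b := by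
  obtain ⟨m, hm, hmK, hfirst⟩ := h.exists_first_mem (a := a) (h.isClosed_arc p b)
    (h.left_mem_arc p b)
  have hsub : arc m b ⊆ arc p b := h.arc_subset_right hmK
  rw [h.arc_eq_union_of_inter_subset ((inter_subset_inter_right _ hsub).trans hfirst)]
  exact union_subset_union (h.arc_subset_left hm) hsub

lemma notMem_arc_trans (h : IsArcSystem arc) (hap : q ∉ arc a p) (hpb : q ∉ arc p b) :
    q ∉ arc a b :=
  fun hq => (h.arc_subset_union a b p hq).elim hap hpb

lemma exists_ne_mem_arc_inter (h : IsArcSystem arc) (hp : p ∉ arc a b) :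
    ∃ m ≠ p, m ∈ arc p a ∧ m ∈ arc p b := by
  rw [h.mem_arc_iff, h.arc_comm a p] at hp
  obtain ⟨m, ⟨hma, hmb⟩, hm⟩ := not_subset.1 hp
  exact ⟨m, hm, hma, hmb⟩

end Betweenness

section Separation

variable {X : Type*} [TopologicalSpace X] [CompactSpace X] {arc : X → X → Set X}
  {a b p q u v : X}

lemma exists_isEndpoint_mem_arc (h : IsArcSystem arc) (hfin : ∀ x : X, (arms x).Finite)
    (hab : a ≠ b) : ∃ e, IsEndpoint e ∧ b ∈ arc a e := by
  have := h.t2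
  have := h.preconnectedSpace
  by_contra! hb
  let K : Set X := {a} ∪ ⋃ e ∈ {e | IsEndpoint e}, arc a e
  have hK : IsPreconnected K := by
    refine isPreconnected_of_forall a fun y hy => ?_
    rcases hy with rfl | hy
    · exact ⟨{y}, subset_union_left, rfl, rfl, isPreconnected_singleton⟩
    · obtain ⟨e, he, hye⟩ := mem_iUnion₂.1 hy
      exact ⟨arc a e, (subset_biUnion_of_mem he).trans subset_union_right, h.left_mem_arc a e, hye,
        h.isPreconnected_arc a e⟩
  have hbK : b ∉ K := by simpa [K, hab.symm] using hb
  obtain ⟨e, he, heK⟩ := exists_isEndpoint_notMem hfin hK ⟨a, .inl rfl⟩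
    ((ne_univ_iff_exists_notMem K).2 ⟨b, hbK⟩)
  exact heK (.inr (mem_biUnion he (h.right_mem_arc a e)))

lemma isClosed_setOf_mem_arc (h : IsArcSystem arc) (hfin : ∀ x : X, (arms x).Finite)
    (hend : {x : X | IsEndpoint x}.Finite) (q a : X) : IsClosed {w | q ∈ arc a w} := by
  rcases eq_or_ne a q with rfl | haq
  · simp [h.left_mem_arc]
  have hunion : {w | q ∈ arc a w} = ⋃ e ∈ {e | IsEndpoint e ∧ q ∈ arc a e}, arc q e := by
    ext w
    simp only [mem_ofPred_eq, mem_iUnion, exists_prop]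
    constructor
    · intro hq
      have haw : a ≠ w := by
        rintro rfl
        exact haq (h.arc_self a ▸ hq).symm
      obtain ⟨e, he, hwe⟩ := h.exists_isEndpoint_mem_arc hfin haw
      exact ⟨e, ⟨he, h.arc_subset_left hwe hq⟩, h.mem_arc_of_mem_left hwe hq⟩
    · rintro ⟨e, ⟨-, hqe⟩, hwe⟩
      exact h.mem_arc_of_mem_right hqe hwe
  rw [hunion]
  exact (hend.subset fun e he => he.1).isClosed_biUnion fun e _ => h.isClosed_arc q e

lemma mem_armTo_iff (h : IsArcSystem arc) (hfin : ∀ x : X, (arms x).Finite)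
    (hend : {x : X | IsEndpoint x}.Finite) : v ∈ armTo q u ↔ q ∉ arc u v := by
  constructor
  · intro hv
    let D : X → Set X := fun z => {w | q ∉ arc z w}
    have hopen (z : X) : IsOpen (D z) := (h.isClosed_setOf_mem_arc hfin hend q z).isOpen_compl
    have hself {w : X} (hw : w ≠ q) : w ∈ D w := by simpa [D, h.arc_self] using hw.symm
    have hu : u ≠ q := by
      rintro rfl
      simp [armTo_self] at hv
    have hdisj : Disjoint (D u) (⋃ z ∈ (D u)ᶜ, D z) := by
      refine disjoint_left.2 fun w hwu hw => ?_
      obtain ⟨z, hz, hwz⟩ := mem_iUnion₂.1 hw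
      exact hz (h.notMem_arc_trans hwu (h.arc_comm z w ▸ hwz))
    have hcover : armTo q u ⊆ D u ∪ ⋃ z ∈ (D u)ᶜ, D z := fun w hw =>
      (em (w ∈ D u)).imp_right fun hwu =>
        mem_biUnion hwu (hself (ne_of_mem_of_not_mem hw (notMem_armTo q u)))
    exact (isPreconnected_armTo q u).subset_left_of_subset_union (hopen u)
      (isOpen_biUnion fun z _ => hopen z) hdisj hcover ⟨u, mem_armTo_of_ne hu, hself hu⟩ hv
  · exact fun hq => subset_armTo (h.isPreconnected_arc u v) hq (h.left_mem_arc u v)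
      (h.right_mem_arc u v)

lemma not_isEndpoint_of_isInnerPt (h : IsArcSystem arc) (hfin : ∀ x : X, (arms x).Finite)
    (hend : {x : X | IsEndpoint x}.Finite) (hp : IsInnerPt arc p) : ¬ IsEndpoint p := by
  rintro hep
  obtain ⟨a, b, ha, hb, hab⟩ := hp
  obtain ⟨C, hC⟩ := ncard_eq_one.1 hep
  have hcomp {x : X} (hx : x ≠ p) : armTo p x = C := by
    rw [← mem_singleton_iff, ← hC]
    exact ⟨x, hx, rfl⟩
  refine (h.mem_armTo_iff hfin hend).1 ?_ hab
  rw [hcomp ha, ← hcomp hb]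
  exact mem_armTo_of_ne hb

end Separation

end IsArcSystem

section LocallyInjectivePaths

open Set Topology

/- Local injectivity keeps coincident pairs off the diagonal, so they form a compact set. -/
lemma exists_coincident_pair_minimizing_dist {K Y : Type*} [MetricSpace K] [CompactSpace K]
    [TopologicalSpace Y] [T2Space Y] {g : K → Y} (hg : Continuous g) (hloc : IsLocallyInjective g)
    (hinj : ¬ Function.Injective g) :
    ∃ u v, u ≠ v ∧ g u = g v ∧ ∀ u' v', u' ≠ v' → g u' = g v' → dist u v ≤ dist u' v' := by
  have hclosed : IsClosed {q : K × K | g q.1 = g q.2} := isClosed_eq (by fun_prop) (by fun_prop)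
  have : CompactSpace (g.Pullback g) := isCompact_iff_compactSpace.1 hclosed.isCompact
  have hcompact : IsCompact (g.pullbackDiagonal)ᶜ :=
    (isLocallyInjective_iff_isOpen_diagonal.1 hloc).isClosed_compl.isCompact
  obtain ⟨u, v, huv, hne⟩ := Function.not_injective_iff.1 hinj
  have hcont : Continuous fun q : g.Pullback g => dist q.1.1 q.1.2 := by fun_prop
  obtain ⟨q, hq, hmin⟩ := hcompact.exists_isMinOn ⟨⟨(u, v), huv⟩, hne⟩ hcont.continuousOn
  exact ⟨q.1.1, q.1.2, hq, q.2, fun u' v' hne' huv' => hmin (a := ⟨(u', v'), huv'⟩) hne'⟩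

lemma exists_lt_of_not_injOn {α β : Type*} [LinearOrder α] {g : α → β} {S : Set α}
    (hg : ¬ InjOn g S) : ∃ u ∈ S, ∃ v ∈ S, u < v ∧ g u = g v := by
  simp only [InjOn, not_forall] at hg
  obtain ⟨u, hu, v, hv, huv, hne⟩ := hg
  rcases lt_or_gt_of_ne hne with hlt | hlt
  exacts [⟨u, hu, v, hv, hlt, huv⟩, ⟨v, hv, u, hu, hlt, huv.symm⟩]

namespace IsArcSystem

variable {X : Type*} [TopologicalSpace X] {arc : X → X → Set X} {g : ℝ → X} {s t : ℝ}

/- A simple loop would contain two different arcs between two of its points. -/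
lemma not_injOn_Ico_of_eq (h : IsArcSystem arc) (hst : s < t) (hg : ContinuousOn g (Icc s t))
    (heq : g s = g t) : ¬ InjOn g (Ico s t) := by
  intro hi
  obtain ⟨m, hsm, hmt⟩ := exists_between hst
  obtain ⟨r, hmr, hrt⟩ := exists_between hmt
  have hinj_right : InjOn g (Icc m t) := by
    rw [← Ico_union_right hmt.le, injOn_union (by simp)]
    refine ⟨hi.mono (Ico_subset_Ico_left hsm.le), injOn_singleton _ _, fun u hu v hv huv => ?_⟩
    rw [mem_singleton_iff.1 hv, ← heq] at huv
    exact (hsm.trans_le hu.1).ne' (hi ⟨hsm.le.trans hu.1, hu.2⟩ (left_mem_Ico.2 hst) huv)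
  have hleft := h.image_Icc_eq_arc hsm.le (hg.mono (Icc_subset_Icc_right hmt.le))
    (hi.mono (Icc_subset_Ico_right hmt))
  have hright := h.image_Icc_eq_arc hmt.le (hg.mono (Icc_subset_Icc_left hsm.le)) hinj_right
  rw [← heq, h.arc_comm, ← hleft] at hright
  have hr : g r ∈ g '' Icc m t := mem_image_of_mem g ⟨hmr.le, hrt.le⟩
  obtain ⟨u, hu, hur⟩ := hright ▸ hr
  exact (hu.2.trans_lt hmr).ne (hi ⟨hu.1, hu.2.trans_lt hmt⟩ ⟨(hsm.trans hmr).le, hrt⟩ hur)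

lemma not_injOn_Ioc_of_eq (h : IsArcSystem arc) (hst : s < t) (hg : ContinuousOn g (Icc s t))
    (heq : g s = g t) : ¬ InjOn g (Ioc s t) := by
  refine fun hi => h.not_injOn_Ico_of_eq hst hg heq ?_
  rw [← Ioo_union_left hst, injOn_union (by simp)]
  refine ⟨hi.mono Ioo_subset_Ioc_self, injOn_singleton _ _, fun u hu v hv huv => ?_⟩
  rw [mem_singleton_iff.1 hv, heq] at huv
  exact hu.2.ne (hi (Ioo_subset_Ioc_self hu) (right_mem_Ioc.2 hst) huv)

lemma exists_coincident_pair_Ioo (h : IsArcSystem arc) (hst : s < t) (hg : ContinuousOn g (Icc s t))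
    (heq : g s = g t) : ∃ u v, s < u ∧ u < v ∧ v < t ∧ g u = g v := by
  obtain ⟨a, ha, b, hb, hab, heq'⟩ := exists_lt_of_not_injOn (h.not_injOn_Ico_of_eq hst hg heq)
  obtain ⟨u, hu, v, hv, huv, heq''⟩ := exists_lt_of_not_injOn
    (h.not_injOn_Ioc_of_eq hab (hg.mono (Icc_subset_Icc ha.1 hb.2.le)) heq')
  exact ⟨u, v, ha.1.trans_lt hu.1, huv, hv.2.trans_lt hb.2, heq''⟩

lemma injOn_Icc_of_isLocallyInjective (h : IsArcSystem arc) (hg : ContinuousOn g (Icc s t))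
    (hloc : IsLocallyInjective ((Icc s t).domRestrict g)) : InjOn g (Icc s t) := by
  have := h.t2
  rw [injOn_iff_injective]
  by_contra hinj
  obtain ⟨u, v, hne, heq, hmin⟩ :=
    exists_coincident_pair_minimizing_dist hg.domRestrict hloc hinj
  wlog huv : u < v generalizing u v
  · exact this v u hne.symm heq.symm (dist_comm u v ▸ hmin) (hne.lt_or_gt.resolve_left huv)
  obtain ⟨u', v', hu, huv', hv, heq'⟩ :=
    h.exists_coincident_pair_Ioo huv (hg.mono (Icc_subset_Icc u.2.1 v.2.2)) heq
  have hle := hmin ⟨u', by grind⟩ ⟨v', by grind⟩ (by simp [huv'.ne]) heq'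
  have hlt : dist u' v' < dist (u : ℝ) v := by
    rw [Real.dist_eq, Real.dist_eq, abs_sub_comm, abs_sub_comm (u : ℝ), abs_of_pos, abs_of_pos] <;>
      linarith
  exact hle.not_gt hlt

lemma injOn_Icc_of_forall_mem_Ioo (h : IsArcSystem arc) (hg : ContinuousOn g (Icc s t))
    (hloc : ∀ r ∈ Ioo s t, ∃ V ∈ 𝓝[Icc s t] r, InjOn g V) : InjOn g (Icc s t) := by
  by_contra hinj
  obtain ⟨a, ha, b, hb, hab, heq⟩ := exists_lt_of_not_injOn hinj
  obtain ⟨u, v, hau, huv, hvb, heq'⟩ :=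
    h.exists_coincident_pair_Ioo hab (hg.mono (Icc_subset_Icc ha.1 hb.2)) heq
  have hsub : Icc u v ⊆ Ioo s t := fun r hr =>
    ⟨ha.1.trans_lt (hau.trans_le hr.1), hr.2.trans_lt (hvb.trans_le hb.2)⟩
  have hsub' : Icc u v ⊆ Icc s t := hsub.trans Ioo_subset_Icc_self
  have hloc' : IsLocallyInjective ((Icc u v).domRestrict g) := by
    refine isLocallyInjective_iff_nhds.2 fun r => ?_
    obtain ⟨V, hV, hi⟩ := hloc r (hsub r.2)
    exact ⟨_, preimage_coe_mem_nhds_subtype.2 (nhdsWithin_mono _ hsub' hV),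
      fun x hx y hy hxy => Subtype.ext (hi hx hy hxy)⟩
  exact huv.ne (h.injOn_Icc_of_isLocallyInjective (hg.mono hsub') hloc'
    (left_mem_Icc.2 huv.le) (right_mem_Icc.2 huv.le) heq')

variable {Y : Type*} [TopologicalSpace Y] {f : Y → X} {A : Set Y} {a b : Y}

lemma injOn_and_image_eq_arc (h : IsArcSystem arc) (hf : Continuous f) (hA : IsArcBetween A a b)
    (hloc : ∀ x ∈ A, x ≠ a → x ≠ b → ∃ V ∈ 𝓝 x, InjOn f V) :
    InjOn f A ∧ f '' A = arc (f a) (f b) := by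
  obtain ⟨g, t, ht, hg, hgi, rfl, rfl, rfl⟩ := hA.exists_eq_image_Icc 0
  have hfg : ContinuousOn (f ∘ g) (Icc 0 t) := (hf.comp hg).continuousOn
  have hi : InjOn (f ∘ g) (Icc 0 t) := by
    refine h.injOn_Icc_of_forall_mem_Ioo hfg fun r hr => ?_
    have hr' := Ioo_subset_Icc_self hr
    obtain ⟨V, hV, hi⟩ := hloc (g r) (mem_image_of_mem g hr')
      (fun hr0 => hr.1.ne' (hgi hr' (left_mem_Icc.2 ht) hr0))
      (fun hrt => hr.2.ne (hgi hr' (right_mem_Icc.2 ht) hrt))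
    exact ⟨Icc 0 t ∩ g ⁻¹' V, Filter.inter_mem self_mem_nhdsWithin
      (nhdsWithin_le_nhds (hg.continuousAt hV)),
      hi.comp (hgi.mono inter_subset_left) fun _ hx => hx.2⟩
  exact ⟨hi.image_of_comp, by rw [← image_comp, h.image_Icc_eq_arc ht hfg hi]; rfl⟩

end IsArcSystem

end LocallyInjectivePaths

namespace HubbardTree

open Set Topology

variable {X : Type*} [TopologicalSpace X] (H : HubbardTree X) {a b p u v w x : X} {k n : ℕ}

lemma isArcSystem : IsArcSystem H.arc :=
  ⟨H.t2, H.arc_isArc, fun {x y A} => H.arc_unique x y A⟩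

lemma exists_mem_nhds_injOn (hx : x ≠ H.c0) : ∃ V ∈ 𝓝 x, InjOn H.f V := by
  obtain ⟨V, hV, hxV, hemb⟩ := H.local_homeo x hx
  exact ⟨V, hV.mem_nhds hxV, injOn_iff_injective.2 hemb.injective⟩

lemma injOn_arc_and_image_arc (hc : H.c0 ∈ H.arc a b → H.c0 = a ∨ H.c0 = b) :
    InjOn H.f (H.arc a b) ∧ H.f '' H.arc a b = H.arc (H.f a) (H.f b) := by
  refine H.isArcSystem.injOn_and_image_eq_arc H.cont (H.arc_isArc a b) fun x hx hxa hxb =>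
    H.exists_mem_nhds_injOn ?_
  rintro rfl
  exact (hc hx).elim hxa hxb

lemma f_eq_c1_iff : H.f p = H.c1 ↔ p = H.c0 :=
  ⟨(H.injOn_arc_and_image_arc fun _ => .inr rfl).1 (H.isArcSystem.left_mem_arc p H.c0)
    (H.isArcSystem.right_mem_arc p H.c0), congrArg H.f⟩

lemma isInnerPt_f (hp : IsInnerPt H.arc p) (hpc : p ≠ H.c0) : IsInnerPt H.arc (H.f p) := by
  have h := H.isArcSystem
  obtain ⟨a, b, ha, hb, hpab, hc⟩ : ∃ a b, a ≠ p ∧ b ≠ p ∧ p ∈ H.arc a b ∧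
      (H.c0 ∈ H.arc a b → H.c0 = a ∨ H.c0 = b) := by
    obtain ⟨a, b, ha, hb, hpab⟩ := hp
    by_cases hc : H.c0 ∈ H.arc a b
    · rcases h.arc_eq_union hpab ▸ hc with hca | hcb
      · exact ⟨H.c0, b, hpc.symm, hb, h.mem_arc_of_mem_left hpab hca, fun _ => .inl rfl⟩
      · exact ⟨a, H.c0, ha, hpc.symm, h.mem_arc_of_mem_right hpab hcb, fun _ => .inr rfl⟩
    · exact ⟨a, b, ha, hb, hpab, fun hc' => absurd hc' hc⟩
  obtain ⟨hinj, himage⟩ := H.injOn_arc_and_image_arc hc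
  exact ⟨H.f a, H.f b, hinj.ne (h.left_mem_arc a b) hpab ha, hinj.ne (h.right_mem_arc a b) hpab hb,
    himage ▸ mem_image_of_mem H.f hpab⟩

lemma isInnerPt_iterate (hp : IsInnerPt H.arc p) (hpc : ∀ i < n, H.f^[i] p ≠ H.c0) :
    IsInnerPt H.arc (H.f^[n] p) := by
  induction n with
  | zero => exact hp
  | succ n ih =>
    rw [Function.iterate_succ_apply']
    exact H.isInnerPt_f (ih fun i hi => hpc i (hi.trans n.lt_succ_self)) (hpc n n.lt_succ_self)

lemma not_isInnerPt_c1 : ¬ IsInnerPt H.arc H.c1 := by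
  classical
  intro hinner
  have h := H.isArcSystem
  have := H.compact
  obtain ⟨e, he, hc1e⟩ := h.exists_isEndpoint_mem_arc H.arms_finite H.crit_not_fixed.symm
  have horbit := H.endpoints_on_orbit e he
  obtain ⟨n, hn⟩ : ∃ n, Nat.find horbit = n + 1 := by
    refine Nat.exists_eq_succ_of_ne_zero fun h0 => ?_
    obtain rfl : H.c0 = e := by simpa [h0] using Nat.find_spec horbit
    exact H.crit_not_fixed (by simpa [h.arc_self] using hc1e)
  have hne : e = H.f^[n] H.c1 := by
    rw [← Nat.find_spec horbit, hn]
    rfl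
  refine h.not_isEndpoint_of_isInnerPt H.arms_finite H.endpoint_finite ?_ he
  rw [hne]
  refine H.isInnerPt_iterate hinner fun i hi hic => Nat.find_min horbit (m := n - i) (by omega) ?_
  nth_rw 1 [← hic]
  rw [← Function.iterate_add_apply, Nat.sub_add_cancel hi.le]
  exact hne.symm

/- All arms at `c₀` are folded onto the only arm at `c₁`, so three of them would yield points with
three preimages. -/
lemma c0_notMem_arc_of_mem (hu : u ≠ H.c0) (hv : v ≠ H.c0) (hw : w ≠ H.c0)
    (huv : H.c0 ∈ H.arc u v) (huw : H.c0 ∈ H.arc u w) : H.c0 ∉ H.arc v w := by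
  intro hvw
  have h := H.isArcSystem
  have himage (z : X) : H.f '' H.arc H.c0 z = H.arc H.c1 (H.f z) :=
    (H.injOn_arc_and_image_arc fun _ => .inl rfl).2
  have hfne {z : X} (hz : z ≠ H.c0) : H.f z ≠ H.c1 := H.f_eq_c1_iff.not.2 hz
  have hnotMem {y z : X} (hy : y ≠ H.c1) (hz : z ≠ H.c1) : H.c1 ∉ H.arc y z := fun hyz =>
    H.not_isInnerPt_c1 ⟨y, z, hy, hz, hyz⟩
  obtain ⟨m, hm, hmu, hmv⟩ := h.exists_ne_mem_arc_inter (hnotMem (hfne hu) (hfne hv))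
  obtain ⟨m', hm', hmm', hmw⟩ := h.exists_ne_mem_arc_inter (hnotMem hm (hfne hw))
  obtain ⟨pu, hpu, hfu⟩ := himage u ▸ h.arc_subset_left hmu hmm'
  obtain ⟨pv, hpv, hfv⟩ := himage v ▸ h.arc_subset_left hmv hmm'
  obtain ⟨pw, hpw, hfw⟩ := himage w ▸ hmw
  have hne {y z p q : X} (hyz : H.c0 ∈ H.arc y z) (hp : p ∈ H.arc H.c0 y) (hq : q ∈ H.arc H.c0 z)
      (hfp : H.f p = m') : p ≠ q := by
    rintro rfl
    rw [h.arc_inter_subset hyz ⟨h.arc_comm y _ ▸ hp, hq⟩] at hfp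
    exact hm' hfp.symm
  have hne_uv := hne huv hpu hpv hfu
  have hne_uw := hne huw hpu hpw hfu
  have hne_vw := hne hvw hpv hpw hfv
  obtain ⟨y, z, hyz⟩ := H.two_preimages m'
  have := hyz hfu
  have := hyz hfv
  have := hyz hfw
  grind

lemma mem_T1_iff : u ∈ H.T1 ↔ H.c0 ∉ H.arc H.c1 u :=
  have := H.compact
  H.isArcSystem.mem_armTo_iff H.arms_finite H.endpoint_finite

lemma symOf_eq_star_iff : H.symOf u = Sym.star ↔ u = H.c0 := by
  unfold symOf
  split_ifs <;> simp_all

lemma symOf_eq_symOf_iff (hu : u ≠ H.c0) (hv : v ≠ H.c0) :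
    H.symOf u = H.symOf v ↔ (u ∈ H.T1 ↔ v ∈ H.T1) := by
  rw [symOf, symOf, if_neg hu, if_neg hv]
  split_ifs <;> simp_all

lemma c0_notMem_arc_iff_mem_T1_iff (hu : u ≠ H.c0) (hv : v ≠ H.c0) :
    H.c0 ∉ H.arc u v ↔ (u ∈ H.T1 ↔ v ∈ H.T1) := by
  have h := H.isArcSystem
  rw [H.mem_T1_iff, H.mem_T1_iff]
  refine ⟨fun huv => ⟨fun hu1 => h.notMem_arc_trans hu1 huv,
    fun hv1 => h.notMem_arc_trans hv1 (h.arc_comm u v ▸ huv)⟩, fun huv => ?_⟩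
  by_cases hu1 : H.c0 ∈ H.arc H.c1 u
  · exact H.c0_notMem_arc_of_mem H.crit_not_fixed hu hv hu1 (not_not.1 (huv.not.1 (not_not.2 hu1)))
  · exact h.notMem_arc_trans (h.arc_comm u _ ▸ hu1) (huv.1 hu1)

lemma c0_notMem_arc_iff :
    H.c0 ∉ H.arc u v ↔ H.symOf u = H.symOf v ∧ H.symOf v ≠ Sym.star := by
  have h := H.isArcSystem
  constructor
  · intro huv
    have hu : u ≠ H.c0 := ne_of_mem_of_not_mem (h.left_mem_arc u v) huv
    have hv : v ≠ H.c0 := ne_of_mem_of_not_mem (h.right_mem_arc u v) huv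
    exact ⟨(H.symOf_eq_symOf_iff hu hv).2 ((H.c0_notMem_arc_iff_mem_T1_iff hu hv).1 huv),
      H.symOf_eq_star_iff.not.2 hv⟩
  · rintro ⟨huv, hstar⟩
    have hu : u ≠ H.c0 := H.symOf_eq_star_iff.not.1 (huv ▸ hstar)
    have hv : v ≠ H.c0 := H.symOf_eq_star_iff.not.1 hstar
    exact (H.c0_notMem_arc_iff_mem_T1_iff hu hv).2 ((H.symOf_eq_symOf_iff hu hv).1 huv)

lemma iterate_image_arc (hc : ∀ i < n, H.c0 ∉ H.arc (H.f^[i] a) (H.f^[i] b)) :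
    H.f^[n] '' H.arc a b = H.arc (H.f^[n] a) (H.f^[n] b) := by
  induction n with
  | zero => simp
  | succ n ih =>
    rw [Function.iterate_succ', image_comp, ih fun i hi => hc i (hi.trans n.lt_succ_self)]
    exact (H.injOn_arc_and_image_arc fun hmem => absurd hmem (hc n n.lt_succ_self)).2

lemma forall_c0_notMem_iterate_image_iff :
    (∀ i < n, H.c0 ∉ H.f^[i] '' H.arc a b) ↔ ∀ i < n, H.c0 ∉ H.arc (H.f^[i] a) (H.f^[i] b) := by
  induction n with
  | zero => simp
  | succ n ih =>
    rw [Nat.forall_lt_succ_right, Nat.forall_lt_succ_right, ih]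
    exact and_congr_right fun hc => by rw [H.iterate_image_arc hc]

lemma c1_mem_iterate_succ_image_iff {A : Set X} :
    H.c1 ∈ H.f^[n + 1] '' A ↔ H.c0 ∈ H.f^[n] '' A := by
  simp only [mem_image, Function.iterate_succ_apply', H.f_eq_c1_iff]

variable {H}

lemma Step.symOf_iterate_ne_star (hx : H.Step x k) (hn : n + 1 < k) :
    H.symOf (H.f^[n] x) ≠ Sym.star := by
  rw [Ne, H.symOf_eq_star_iff, ← H.f_eq_c1_iff, ← Function.iterate_succ_apply' H.f]
  exact hx.2.2 (n + 1) (Nat.le_add_left 1 n) hn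

lemma Step.iterate (hx : H.Step x k) (hn : n < k) : H.Step (H.f^[n] x) (k - n) := by
  simp only [Step, ← Function.iterate_add_apply]
  exact ⟨by omega, by rw [Nat.sub_add_cancel hn.le, hx.2.1],
    fun j _ _ => hx.2.2 (j + n) (by omega) (by omega)⟩

lemma isClosestPrecritical_iff : H.IsClosestPrecritical x k ↔
    H.Step x k ∧ ∀ j, 1 ≤ j → j < k → H.itin x j = H.kneading j := by
  refine and_congr_right fun hx => ?_
  have hshift {P : ℕ → Prop} : (∀ j, 1 ≤ j → j < k → P j) ↔ ∀ i < k - 1, P (i + 1) :=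
    ⟨fun hP i hi => hP (i + 1) (by omega) (by omega), fun hP j hj hjk => by
      simpa only [Nat.sub_add_cancel hj] using hP (j - 1) (by omega)⟩
  rw [hshift, hshift]
  simp only [H.c1_mem_iterate_succ_image_iff]
  rw [H.forall_c0_notMem_iterate_image_iff]
  refine forall₂_congr fun i hi => ?_
  rw [H.c0_notMem_arc_iff, and_iff_left (hx.symOf_iterate_ne_star (by omega)), eq_comm]
  rfl

variable (H) in
lemma itin_iterate (x : X) (n : ℕ) {j : ℕ} (hj : 1 ≤ j) :
    H.itin (H.f^[n] x) j = H.itin x (j + n) := by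
  rw [itin, itin, ← Function.iterate_add_apply, Nat.sub_add_comm hj]

end HubbardTree

lemma apply_add_eq_of_lt_rho {ν : ℕ → Sym} {n j : ℕ} (hj : 1 ≤ j)
    (hlt : ((j + n : ℕ) : ℕ∞) < rho ν n) : ν (j + n) = ν j := by
  by_contra hne
  exact hlt.not_ge (sInf_le ⟨j + n, rfl, by omega, by rwa [Nat.add_sub_cancel]⟩)

/-- Lemma 5.10, "Images of Closest Precritical Points".
If `k < k' ≤ ρ(k)` and the closest precritical point `ζ_{k'}` exists in the tree,
then `f^[k] ζ_{k'}` is the closest precritical point `ζ_{k'-k}`. -/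
theorem images_of_closest_precritical_points
    {X : Type*} [TopologicalSpace X] (H : HubbardTree X) (k k' : ℕ) (x : X)
    (hlt : k < k') (hle : (k' : ℕ∞) ≤ rho H.kneading k)
    (hx : H.IsClosestPrecritical x k') :
    H.IsClosestPrecritical (H.f^[k] x) (k' - k) := by
  rw [HubbardTree.isClosestPrecritical_iff] at hx ⊢
  obtain ⟨hstep, hitin⟩ := hx
  refine ⟨hstep.iterate hlt, fun j hj hjk => ?_⟩
  have hjk' : j + k < k' := by omega
  have hrho : ((j + k : ℕ) : ℕ∞) < rho H.kneading k := (Nat.cast_lt.2 hjk').trans_le hle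
  calc H.itin (H.f^[k] x) j = H.itin x (j + k) := H.itin_iterate x k hj
    _ = H.kneading (j + k) := hitin (j + k) (by omega) hjk'
    _ = H.kneading j := apply_add_eq_of_lt_rho hj hrho

end HubbardTrees
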